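/- arXiv:2502.16727 — 4 statements merged into one kernel-verified Lean document; each statement's English description precedes it below -/
import Mathlib

section
/- Let R be a commutative ring, let k, l ≥ 1, and let α : Fin k → R and β : Fin l → R be families of elements. Define c_n ∈ R (for n ∈ ℤ, with c_n = 0 for n < 0) to be the n-th coefficient of the formal power series (∏_{j=1}^{l} (1 + β_j t)) · (∏_{i=1}^{k} (1 + α_i t))⁻¹ in R[[t]] (the inverse exists since the constant coefficient of ∏(1 + α_i t) is 1, hence a unit of R[[t]]). Then the determinant of the k×k matrix whose (i,j)-entry is c_{l − i + j} (for 1 ≤ i, j ≤ k) equals ∏_{i=1}^{k} ∏_{j=1}^{l} (β_j − α_i). (This is the computation identifying the Thom polynomial of the degeneracy type Σ^k with the rectangular Schur determinant Δ_{l^k}(c), via the equality Δ_{l^k}(c(ρ₂ − ρ₁)) = ∏(β_j − α_i) in §3.1.1.) -/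
open Polynomial in
lemma rev_aux {R : Type*} [CommRing R] : ∀ (d : ℕ) (b : Fin d → R),
    (∀ n, d < n → (∏ j, (X + C (b j))).coeff n = 0) ∧
    (∀ n, d < n → PowerSeries.coeff n
      (∏ j, (1 + PowerSeries.C (b j) * PowerSeries.X)) = 0) ∧
    (∀ i e, i + e = d → PowerSeries.coeff i
      (∏ j, (1 + PowerSeries.C (b j) * PowerSeries.X)) = (∏ j, (X + C (b j))).coeff e) := by
  intro d
  induction d with
  | zero =>
    intro b
    refine ⟨fun n hn => ?_, fun n hn => ?_, fun i e h => ?_⟩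
    · simp [Polynomial.coeff_one]; omega
    · simp [PowerSeries.coeff_one]; omega
    · obtain ⟨rfl, rfl⟩ : i = 0 ∧ e = 0 := by omega
      simp
  | succ d ih =>
    intro b
    obtain ⟨h1, h2, h3⟩ := ih (fun j => b j.succ)
    rw [Fin.prod_univ_succ, Fin.prod_univ_succ]
    generalize (∏ j : Fin d, (X + C (b j.succ))) = q at *
    generalize (∏ j : Fin d, (1 + PowerSeries.C (b j.succ) * PowerSeries.X)) = Q at *
    have e1 : ∀ n, ((X + C (b 0)) * q).coeff (n + 1) = q.coeff n + b 0 * q.coeff (n + 1) := by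
      intro n; simp [add_mul, Polynomial.coeff_X_mul]
    have e1' : ((X + C (b 0)) * q).coeff 0 = b 0 * q.coeff 0 := by
      simp [add_mul]
    have e2 : ∀ n, PowerSeries.coeff (n + 1) ((1 + PowerSeries.C (b 0) * PowerSeries.X) * Q)
        = PowerSeries.coeff (n + 1) Q + b 0 * PowerSeries.coeff n Q := by
      intro n
      rw [add_mul, one_mul, mul_assoc, map_add, PowerSeries.coeff_C_mul,
        PowerSeries.coeff_succ_X_mul]
    have e2' : PowerSeries.coeff 0 ((1 + PowerSeries.C (b 0) * PowerSeries.X) * Q)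
        = PowerSeries.coeff 0 Q := by
      rw [add_mul, one_mul, mul_assoc, map_add, PowerSeries.coeff_C_mul,
        PowerSeries.coeff_zero_X_mul]; simp
    refine ⟨fun n hn => ?_, fun n hn => ?_, fun i e h => ?_⟩
    · obtain ⟨n, rfl⟩ : ∃ m, n = m + 1 := ⟨n - 1, by omega⟩
      rw [e1, h1 _ (by omega), h1 _ (by omega)]; simp
    · obtain ⟨n, rfl⟩ : ∃ m, n = m + 1 := ⟨n - 1, by omega⟩
      rw [e2, h2 _ (by omega), h2 _ (by omega)]; simp
    · rcases i with _ | i <;> rcases e with _ | e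
      · omega
      · rw [e1, e2', h1 (e + 1) (by omega), h3 0 e (by omega)]; simp
      · rw [e1', e2, h2 (i + 1) (by omega), h3 i 0 (by omega)]; simp
      · rw [e1, e2, h3 (i + 1) e (by omega), h3 i (e + 1) (by omega)]

lemma conv_aux {R : Type*} [CommRing R] (d : ℕ) (q : Polynomial R) (Q a : PowerSeries R)
    (h2 : ∀ n, d < n → PowerSeries.coeff n Q = 0)
    (h3 : ∀ i e, i + e = d → PowerSeries.coeff i Q = q.coeff e)
    (N m j : ℕ) (hN : j + d < N) :
    ∑ n : Fin N, (if m ≤ (n : ℕ) then PowerSeries.coeff ((n : ℕ) - m) a else 0) *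
      (if (n : ℕ) ∈ Set.Icc j (j + d) then q.coeff ((n : ℕ) - j) else 0) =
    if m ≤ d + j then PowerSeries.coeff (d + j - m) (Q * a) else 0 := by
  rw [Fin.sum_univ_eq_sum_range (fun n => (if m ≤ n then PowerSeries.coeff (n - m) a else 0) *
      (if n ∈ Set.Icc j (j + d) then q.coeff (n - j) else 0)) N]
  split_ifs with h
  · rw [mul_comm Q, PowerSeries.coeff_mul, Finset.Nat.sum_antidiagonal_eq_sum_range_succ_mk]
    have hs : Finset.Ico m (d + j + 1) ⊆ Finset.range N := by
      intro x; simp only [Finset.mem_Ico, Finset.mem_range]; omega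
    rw [← Finset.sum_subset hs, Finset.sum_Ico_eq_sum_range]
    · rw [show d + j + 1 - m = (d + j - m).succ by omega]
      refine Finset.sum_congr rfl fun x hx => ?_
      rw [Finset.mem_range] at hx
      rw [if_pos (by omega), Nat.add_sub_cancel_left]
      congr 1
      split_ifs with h'
      · rw [Set.mem_Icc] at h'
        rw [h3 _ (m + x - j) (by omega)]
      · rw [Set.mem_Icc] at h'
        rw [h2 _ (by omega)]
    · intro x _ hx
      simp only [Finset.mem_Ico, not_and_or, not_le, not_lt] at hx
      rcases hx with hx | hx
      · rw [if_neg (by omega), zero_mul]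
      · rw [if_neg (c := _ ∈ _) (by rw [Set.mem_Icc]; omega), mul_zero]
  · refine Finset.sum_eq_zero fun x _ => ?_
    by_cases hx : m ≤ x
    · rw [if_neg (c := _ ∈ _) (by rw [Set.mem_Icc]; omega), mul_zero]
    · rw [if_neg hx, zero_mul]

open Polynomial in
lemma res_aux {R : Type*} [CommRing R] (k l : ℕ) (α : Fin k → R) (β : Fin l → R) :
    resultant (∏ i, (X + C (α i))) (∏ j, (X + C (β j))) k l =
      ∏ i : Fin k, ∏ j : Fin l, (β j - α i) := by
  nontriviality R
  have hd : ∀ (d : ℕ) (b : Fin d → R), (∏ j, (X + C (b j))).natDegree = d := by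
    intro d b
    rw [natDegree_prod_of_monic _ _ (fun i _ => monic_X_add_C _)]
    simp
  have := resultant_prod_left Finset.univ (fun i => X + C (α i)) (∏ j, (X + C (β j))) l
    (by simp) (hd l β).le
  rw [hd] at this
  rw [this]
  refine Finset.prod_congr rfl fun i _ => ?_
  rw [natDegree_X_add_C, resultant_X_add_C_left _ _ _ (hd l β).le, eval_prod]
  refine Finset.prod_congr rfl fun j _ => ?_
  simp; ring

/-- **Thom–Porteous determinant identity.**
Let `R` be a commutative ring, `k, l ≥ 1`, `α : Fin k → R`, `β : Fin l → R`.
Let `c n` (for `n : ℤ`, zero for `n < 0`) be the `n`-th coefficient of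
`(∏ (1 + β j • t)) * (∏ (1 + α i • t))⁻¹` in `R⟦t⟧` (the inverse taken via `invOfUnit`,
since the constant coefficient of `∏ (1 + α i • t)` is `1`).
Then `det (c (l - i + j))_{1 ≤ i,j ≤ k} = ∏_{i,j} (β j - α i)`. -/
theorem stmt_0 (R : Type*) [CommRing R] (k l : ℕ) (hk : 1 ≤ k) (hl : 1 ≤ l)
    (α : Fin k → R) (β : Fin l → R) (c : ℤ → R)
    (hc_neg : ∀ n : ℤ, n < 0 → c n = 0)
    (hc : ∀ n : ℕ, c n = PowerSeries.coeff n
      ((∏ j : Fin l, (1 + PowerSeries.C (β j) * PowerSeries.X)) *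
        PowerSeries.invOfUnit (∏ i : Fin k, (1 + PowerSeries.C (α i) * PowerSeries.X)) 1)) :
    Matrix.det (Matrix.of fun i j : Fin k => c ((l : ℤ) - (i : ℤ) + (j : ℤ))) =
      ∏ i : Fin k, ∏ j : Fin l, (β j - α i) := by
  obtain ⟨-, f2, f3⟩ := rev_aux k α
  obtain ⟨-, g2, g3⟩ := rev_aux l β
  rw [← res_aux]
  have hA : (∏ i : Fin k, (1 + PowerSeries.C (α i) * PowerSeries.X)) *
      PowerSeries.invOfUnit (∏ i : Fin k, (1 + PowerSeries.C (α i) * PowerSeries.X)) 1 = 1 := by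
    apply PowerSeries.mul_invOfUnit
    simp [map_prod]
  have ha0 : PowerSeries.coeff 0
      (PowerSeries.invOfUnit (∏ i : Fin k, (1 + PowerSeries.C (α i) * PowerSeries.X)) 1) = 1 := by
    simp
  generalize (PowerSeries.invOfUnit
    (∏ i : Fin k, (1 + PowerSeries.C (α i) * PowerSeries.X)) 1) = a at *
  generalize (∏ i : Fin k, (1 + PowerSeries.C (α i) * PowerSeries.X)) = A at *
  generalize (∏ i : Fin l, (1 + PowerSeries.C (β i) * PowerSeries.X)) = B at *
  generalize (∏ i : Fin k, (Polynomial.X + Polynomial.C (α i))) = f at *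
  generalize (∏ i : Fin l, (Polynomial.X + Polynomial.C (β i))) = g at *
  let T : Matrix (Fin (k + l)) (Fin (k + l)) R := Matrix.of fun m n =>
    if (m : ℕ) ≤ (n : ℕ) then PowerSeries.coeff ((n : ℕ) - m) a else 0
  have hT : T.det = 1 := by
    rw [Matrix.det_of_upperTriangular]
    · refine Finset.prod_eq_one fun i _ => ?_
      simp only [T, Matrix.of_apply, le_refl, if_true, Nat.sub_self]
      exact ha0
    · intro i j hij
      have : (j : ℕ) < i := hij
      simp only [T, Matrix.of_apply]
      rw [if_neg (by omega)]
  have hl1 : ∀ (m : Fin (k + l)) (j : Fin k),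
      (T * Polynomial.sylvester f g k l) m (Fin.castAdd l j) =
        if (m : ℕ) ≤ l + j then PowerSeries.coeff (l + j - m) (B * a) else 0 := by
    intro m j
    rw [← conv_aux l g B a g2 g3 (k + l) m j (by omega), Matrix.mul_apply]
    simp only [T, Polynomial.sylvester, Matrix.of_apply, Fin.addCases_left]
  have hr1 : ∀ (m : Fin (k + l)) (j : Fin l),
      (T * Polynomial.sylvester f g k l) m (Fin.natAdd k j) =
        if (m : ℕ) ≤ k + j then PowerSeries.coeff (k + j - m) (A * a) else 0 := by
    intro m j
    rw [← conv_aux k f A a f2 f3 (k + l) m j (by omega), Matrix.mul_apply]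
    simp only [T, Polynomial.sylvester, Matrix.of_apply, Fin.addCases_right]
  have key : (T * Polynomial.sylvester f g k l).submatrix finSumFinEquiv finSumFinEquiv =
      Matrix.fromBlocks (Matrix.of fun i j : Fin k => c ((l : ℤ) - (i : ℤ) + (j : ℤ))) 0
        (Matrix.of fun (i : Fin l) (j : Fin k) =>
          (T * Polynomial.sylvester f g k l) (Fin.natAdd k i) (Fin.castAdd l j)) 1 := by
    ext i j
    rcases i with i | i <;> rcases j with j | j
    · simp only [Matrix.submatrix_apply, finSumFinEquiv_apply_left, Matrix.fromBlocks_apply₁₁,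
        Matrix.of_apply]
      rw [hl1, Fin.val_castAdd]
      split_ifs with h
      · rw [← hc]; congr 1; push_cast [h]; ring
      · rw [hc_neg]; omega
    · simp only [Matrix.submatrix_apply, finSumFinEquiv_apply_left, finSumFinEquiv_apply_right,
        Matrix.fromBlocks_apply₁₂, Matrix.zero_apply]
      rw [hr1, hA, Fin.val_castAdd, PowerSeries.coeff_one, if_neg (c := _ = 0) (by omega)]
      simp
    · simp only [Matrix.submatrix_apply, finSumFinEquiv_apply_left, finSumFinEquiv_apply_right,
        Matrix.fromBlocks_apply₂₁, Matrix.of_apply]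
    · simp only [Matrix.submatrix_apply, finSumFinEquiv_apply_right,
        Matrix.fromBlocks_apply₂₂]
      rw [hr1, hA, Fin.val_natAdd, PowerSeries.coeff_one, Matrix.one_apply, ← ite_and]
      congr 1
      rw [Fin.ext_iff, eq_iff_iff]; omega
  have hdet := congrArg Matrix.det key
  rw [Matrix.det_submatrix_equiv_self, Matrix.det_mul, hT, one_mul,
    Matrix.det_fromBlocks_zero₁₂, Matrix.det_one, mul_one] at hdet
  rw [← hdet]
  rfl
end

section
/- Let R be a commutative ring and let a, b : ℤ → R be sequences with a_n = b_n = 0 for n < 0, a_0 = b_0 = 1, and such that for every n ≥ 1 one has ∑_{i=0}^{n} (−1)^i a_i b_{n−i} = 0 (i.e. the generating series A(t) = ∑ a_i t^i and B(−t) = ∑ (−1)^j b_j t^j are mutually inverse in R[[t]]). Let ℓ, m ≥ 1 and let λ_1 ≥ λ_2 ≥ ⋯ ≥ λ_ℓ ≥ 0 be integers with λ_1 ≤ m, and let λ'_j = #{i : λ_i ≥ j} for 1 ≤ j ≤ m be the conjugate partition. Then det_{1≤i,j≤ℓ}(a_{λ_i − i + j}) = det_{1≤i,j≤m}(b_{λ'_i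 − i + j}). (This is the duality identity Δ_λ(c(F − E)) = Δ_{λ^∨}(c(E* − F*)) invoked in §1.1.1, stated in its universal form for any pair of sequences inverse to each other up to alternating signs.) -/
open Matrix in
/-- Jacobi's complementary minor identity in block form. -/
lemma jacobi_aux {R : Type*} [CommRing R] {ℓ m : ℕ}
    (H E : Matrix (Fin ℓ ⊕ Fin m) (Fin ℓ ⊕ Fin m) R) (h : H * E = 1) :
    H.toBlocks₁₁.det = H.det * E.toBlocks₂₂.det := by
  have h2 : H * fromBlocks 1 E.toBlocks₁₂ 0 E.toBlocks₂₂
      = fromBlocks H.toBlocks₁₁ 0 H.toBlocks₂₁ 1 := by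
    rw [← fromBlocks_toBlocks H, ← fromBlocks_toBlocks E, fromBlocks_multiply,
      ← fromBlocks_one, fromBlocks_inj] at h
    obtain ⟨-, h12, -, h22⟩ := h
    conv_lhs => rw [← fromBlocks_toBlocks H]
    rw [fromBlocks_multiply, fromBlocks_inj]
    simp [h12, h22]
  have h3 := congrArg det h2
  rw [det_mul, det_fromBlocks_zero₂₁, det_fromBlocks_zero₁₂] at h3
  simpa using h3.symm

/-- The two Toeplitz matrices are mutually inverse. -/
lemma toeplitz_aux {R : Type*} [CommRing R] (a b : ℤ → R)
    (ha_neg : ∀ n : ℤ, n < 0 → a n = 0) (hb_neg : ∀ n : ℤ, n < 0 → b n = 0)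
    (ha0 : a 0 = 1) (hb0 : b 0 = 1)
    (hab : ∀ n : ℕ, 1 ≤ n →
      ∑ i ∈ Finset.range (n + 1), (-1 : R) ^ i * a i * b ((n : ℤ) - i) = 0) (N : ℕ) :
    (Matrix.of fun p q : Fin N => a ((p : ℤ) - q)) *
      (Matrix.of fun q r : Fin N => (-1 : R) ^ ((q : ℕ) + r) * b ((q : ℤ) - r)) = 1 := by
  ext p r
  rw [Matrix.mul_apply]
  simp only [Matrix.of_apply]
  rw [Fin.sum_univ_eq_sum_range
    (fun q : ℕ => a ((p : ℤ) - q) * ((-1 : R) ^ (q + (r : ℕ)) * b ((q : ℤ) - r))) N]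
  rcases lt_trichotomy p r with h | h | h
  · rw [Matrix.one_apply_ne h.ne]
    apply Finset.sum_eq_zero
    intro q _
    have h' : (p : ℕ) < r := h
    rcases lt_or_ge q (r : ℕ) with h1 | h1
    · rw [hb_neg _ (by omega)]; simp
    · rw [ha_neg _ (by omega)]; simp
  · subst h
    rw [Matrix.one_apply_eq, Finset.sum_eq_single (p : ℕ)]
    · simp [ha0, hb0, ← two_mul]
    · intro q _ hq
      rcases lt_or_gt_of_ne hq with h1 | h1
      · rw [hb_neg _ (by omega)]; simp
      · rw [ha_neg _ (by omega)]; simp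
    · intro hp; simp at hp
  · rw [Matrix.one_apply_ne h.ne']
    have h' : (r : ℕ) < p := h
    obtain ⟨n, hn⟩ := Nat.exists_eq_add_of_lt h'
    have hp := p.isLt
    have key : ∑ q ∈ Finset.range N,
        a ((p : ℤ) - q) * ((-1 : R) ^ (q + (r : ℕ)) * b ((q : ℤ) - r)) =
        ∑ i ∈ Finset.range (n + 1 + 1),
          (-1 : R) ^ (n + 1) * ((-1 : R) ^ i * a i * b (((n + 1 : ℕ) : ℤ) - i)) := by
      symm
      apply Finset.sum_of_injOn (fun i => (p : ℕ) - i)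
      · intro x hx y hy hxy
        simp only [Finset.coe_range, Set.mem_Iio] at hx hy hxy
        omega
      · intro x hx
        simp only [Finset.coe_range, Set.mem_Iio] at hx ⊢
        omega
      · intro q hq hq2
        simp only [Finset.coe_range, Set.mem_image, Set.mem_Iio, not_exists, not_and] at hq2
        rcases lt_or_ge q (r : ℕ) with h1 | h1
        · rw [hb_neg _ (by omega)]; simp
        · have : (p : ℕ) < q := by
            by_contra h2
            exact hq2 (p - q) (by omega) (by omega)
          rw [ha_neg _ (by omega)]; simp
      · intro i hi
        simp only [Finset.mem_range] at hi
        have e1 : ((p : ℕ) : ℤ) - (((p : ℕ) - i : ℕ) : ℤ) = i := by omega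
        have e2 : (((p : ℕ) - i : ℕ) : ℤ) - (r : ℕ) = ((n + 1 : ℕ) : ℤ) - i := by omega
        have e3 : (-1 : R) ^ ((p : ℕ) - i + r) = (-1) ^ (n + 1) * (-1) ^ i := by
          rw [← pow_add]
          have : n + 1 + i + 2 * ((p : ℕ) - i + r - (n + 1)) = (p : ℕ) - i + r
            ∨ (p : ℕ) - i + r + 2 * i = n + 1 + i + 2 * r := by omega
          rcases this with h | h
          · rw [← h, pow_add _ (n + 1 + i), pow_mul]; simp
          · have h4 := congrArg (fun k => (-1 : R) ^ k) h
            simpa [pow_add, pow_mul] using h4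
        rw [e1, e2, e3]; ring
    rw [key, ← Finset.mul_sum, hab (n + 1) (by omega), mul_zero]

/-- Sign of a (inverse) shuffle permutation. -/
lemma sign_shuffle_aux {ℓ m : ℕ} (π : Equiv.Perm (Fin (ℓ + m)))
    (h1 : ∀ i j : Fin ℓ, i < j → π (Fin.castAdd m i) < π (Fin.castAdd m j))
    (h2 : ∀ i j : Fin m, i < j → π (Fin.natAdd ℓ i) < π (Fin.natAdd ℓ j)) :
    Equiv.Perm.sign π = ∏ j : Fin m, ∏ i : Fin ℓ,
      (if π (Fin.castAdd m i) < π (Fin.natAdd ℓ j) then 1 else -1) := by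
  rw [Equiv.Perm.sign_eq_prod_prod_Iio]
  have e : ∀ j : Fin (ℓ + m), ∏ i ∈ Finset.Iio j, (if π i < π j then (1 : ℤˣ) else -1) =
      ∏ i, if i < j then (if π i < π j then (1 : ℤˣ) else -1) else 1 := by
    intro j
    rw [← Finset.prod_filter]
    congr 1
    ext; simp
  simp only [e]
  rw [Fin.prod_univ_add]
  simp only [Fin.prod_univ_add]
  have t1 : ∀ i j : Fin ℓ, (if Fin.castAdd m i < Fin.castAdd m j then
      (if π (Fin.castAdd m i) < π (Fin.castAdd m j) then (1 : ℤˣ) else -1) else 1) = 1 := by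
    intro i j
    split_ifs with a b
    · rfl
    · exact absurd (h1 i j a) b
    · rfl
  have t2 : ∀ (i : Fin m) (j : Fin ℓ), (if Fin.natAdd ℓ i < Fin.castAdd m j then
      (if π (Fin.natAdd ℓ i) < π (Fin.castAdd m j) then (1 : ℤˣ) else -1) else 1) = 1 := by
    intro i j
    rw [if_neg]
    simp only [Fin.lt_def, Fin.val_natAdd, Fin.val_castAdd]
    omega
  have t3 : ∀ i j : Fin m, (if Fin.natAdd ℓ i < Fin.natAdd ℓ j then
      (if π (Fin.natAdd ℓ i) < π (Fin.natAdd ℓ j) then (1 : ℤˣ) else -1) else 1) = 1 := by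
    intro i j
    split_ifs with a b
    · rfl
    · exact absurd (h2 i j (by simpa using a)) b
    · rfl
  have t4 : ∀ (i : Fin ℓ) (j : Fin m), Fin.castAdd m i < Fin.natAdd ℓ j := by
    intro i j
    simp only [Fin.lt_def, Fin.val_natAdd, Fin.val_castAdd]
    omega
  simp only [t1, t2, t3, t4, if_true, Finset.prod_const_one, mul_one, one_mul]

/-- Galois connection between a partition and its conjugate. -/
lemma conj_aux {ℓ : ℕ} (lam : Fin ℓ → ℕ) (hanti : Antitone lam) (i : Fin ℓ) (j : ℕ) :
    j + 1 ≤ lam i ↔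
      (i : ℕ) < (Finset.univ.filter fun t : Fin ℓ => j + 1 ≤ lam t).card := by
  constructor
  · intro h
    have : Finset.Iic i ⊆ Finset.univ.filter fun t : Fin ℓ => j + 1 ≤ lam t := by
      intro t ht
      simp only [Finset.mem_Iic] at ht
      simp only [Finset.mem_filter, Finset.mem_univ, true_and]
      exact h.trans (hanti ht)
    have := Finset.card_le_card this
    rw [Fin.card_Iic] at this
    omega
  · intro h
    by_contra h'
    have : (Finset.univ.filter fun t : Fin ℓ => j + 1 ≤ lam t) ⊆ Finset.Iio i := by
      intro t ht
      simp only [Finset.mem_filter, Finset.mem_univ, true_and] at ht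
      simp only [Finset.mem_Iio]
      by_contra h2
      exact h' (ht.trans (hanti (not_lt.mp h2)))
    have := Finset.card_le_card this
    rw [Fin.card_Iio] at this
    omega


/-- **Schur-determinant duality (conjugate partition identity).**
If `a b : ℤ → R` vanish in negative degrees, have `a 0 = b 0 = 1`, and satisfy
`∑_{i=0}^n (-1)^i a i * b (n - i) = 0` for all `n ≥ 1` (i.e. `A(t)` and `B(-t)` are mutually
inverse power series), and `λ` is a partition with at most `ℓ` parts, each at most `m`,
with conjugate partition `λ'`, then `det (a (λ_i - i + j))_{ℓ×ℓ} = det (b (λ'_i - i + j))_{m×m}`. -/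
theorem stmt_1 (R : Type*) [CommRing R] (a b : ℤ → R)
    (ha_neg : ∀ n : ℤ, n < 0 → a n = 0) (hb_neg : ∀ n : ℤ, n < 0 → b n = 0)
    (ha0 : a 0 = 1) (hb0 : b 0 = 1)
    (hab : ∀ n : ℕ, 1 ≤ n →
      ∑ i ∈ Finset.range (n + 1), (-1 : R) ^ i * a i * b ((n : ℤ) - i) = 0)
    (ℓ m : ℕ) (hℓ : 1 ≤ ℓ) (hm : 1 ≤ m)
    (lam : Fin ℓ → ℕ) (hanti : Antitone lam) (hbound : lam ⟨0, hℓ⟩ ≤ m) :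
    Matrix.det (Matrix.of fun i j : Fin ℓ => a ((lam i : ℤ) - (i : ℤ) + (j : ℤ))) =
      Matrix.det (Matrix.of fun i j : Fin m =>
        b (((Finset.univ.filter fun t : Fin ℓ => (i : ℕ) + 1 ≤ lam t).card : ℤ)
            - (i : ℤ) + (j : ℤ))) := by
  have hlam : ∀ i, lam i ≤ m := fun i => (hanti (Fin.mk_le_of_le_val (Nat.zero_le _))).trans hbound
  set c : Fin m → ℕ := fun j =>
    (Finset.univ.filter fun t : Fin ℓ => (j : ℕ) + 1 ≤ lam t).card with hc
  have hconj : ∀ (i : Fin ℓ) (j : Fin m), (j : ℕ) + 1 ≤ lam i ↔ (i : ℕ) < c j :=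
    fun i j => conj_aux lam hanti i j
  have hcl : ∀ j, c j ≤ ℓ := fun j => by
    have := Finset.card_le_univ (Finset.univ.filter fun t : Fin ℓ => (j : ℕ) + 1 ≤ lam t)
    rwa [Fintype.card_fin] at this
  have hcanti : Antitone c := by
    intro j k hjk
    apply Finset.card_le_card
    intro t
    simp only [Finset.mem_filter, Finset.mem_univ, true_and]
    have : (j : ℕ) ≤ k := hjk
    omega
  let pf : Fin ℓ → Fin (ℓ + m) := fun i => ⟨lam (Fin.rev i) + i, by have := hlam i.rev; omega⟩
  let qf : Fin m → Fin (ℓ + m) := fun j => ⟨ℓ + j - c j, by omega⟩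
  have hp : ∀ i j : Fin ℓ, i < j → pf i < pf j := by
    intro i j hij
    have h1 : lam (Fin.rev i) ≤ lam (Fin.rev j) := hanti (Fin.rev_le_rev.mpr hij.le)
    have h2 : (i : ℕ) < j := hij
    simp only [pf, Fin.lt_def]
    omega
  have hq : ∀ i j : Fin m, i < j → qf i < qf j := by
    intro i j hij
    have h1 := hcanti hij.le
    have h2 : (i : ℕ) < j := hij
    have := hcl i
    simp only [qf, Fin.lt_def]
    omega
  have hpq : ∀ (i : Fin ℓ) (j : Fin m), (pf i < qf j ↔ ¬ ((j : ℕ) + 1 ≤ lam i.rev)) ∧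
      pf i ≠ qf j := by
    intro i j
    have h1 := hconj i.rev j
    have h2 := hcl j
    have h3 := i.isLt
    rw [Fin.val_rev] at h1
    simp only [pf, qf, Fin.lt_def, ne_eq, Fin.mk.injEq]
    constructor
    · constructor <;> intro h <;> omega
    · intro h; omega
  have hinj : Function.Injective (Fin.append pf qf) := by
    rw [Fin.append_injective_iff]
    refine ⟨(show StrictMono pf from fun i j h => hp i j h).injective,
      (show StrictMono qf from fun i j h => hq i j h).injective, fun i j => (hpq i j).2⟩
  let π : Equiv.Perm (Fin (ℓ + m)) :=
    Equiv.ofBijective _ (Finite.injective_iff_bijective.mp hinj)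
  have hπ1 : ∀ i, π (Fin.castAdd m i) = pf i := fun i => Fin.append_left pf qf i
  have hπ2 : ∀ i, π (Fin.natAdd ℓ i) = qf i := fun i => Fin.append_right pf qf i
  have hsign := sign_shuffle_aux π (by simpa only [hπ1] using hp) (by simpa only [hπ2] using hq)
  simp only [hπ1, hπ2, (hpq _ _).1] at hsign
  set H : Matrix (Fin (ℓ + m)) (Fin (ℓ + m)) R := Matrix.of fun p q => a ((p : ℤ) - q) with hH
  set E : Matrix (Fin (ℓ + m)) (Fin (ℓ + m)) R :=
    Matrix.of fun q r => (-1 : R) ^ ((q : ℕ) + r) * b ((q : ℤ) - r) with hE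
  have hHE : H * E = 1 := toeplitz_aux a b ha_neg hb_neg ha0 hb0 hab (ℓ + m)
  have hdetH : H.det = 1 := by
    rw [Matrix.det_of_isLowerTriangular]
    · simp [hH, ha0]
    · intro i j hij
      have : (i : ℕ) < j := hij
      exact ha_neg _ (by omega)
  let s : Fin ℓ ⊕ Fin m ≃ Fin (ℓ + m) := finSumFinEquiv
  have hmul : (H.submatrix (π ∘ s) s) * (E.submatrix s (π ∘ s)) = 1 := by
    rw [Matrix.submatrix_mul_equiv, hHE]
    exact Matrix.submatrix_one_equiv (s.trans π)
  have hJ := jacobi_aux _ _ hmul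
  have hdet1 : (H.submatrix (π ∘ s) s).det = (Equiv.Perm.sign π : ℤˣ) := by
    have : H.submatrix (π ∘ s) s = (H.submatrix π id).submatrix s s := by ext; rfl
    rw [this, Matrix.det_submatrix_equiv_self, Matrix.det_permute, hdetH, mul_one]
  have hA : (H.submatrix (π ∘ s) s).toBlocks₁₁.det =
      Matrix.det (Matrix.of fun i j : Fin ℓ => a ((lam i : ℤ) - (i : ℤ) + (j : ℤ))) := by
    rw [← Matrix.det_submatrix_equiv_self Fin.revPerm
      (Matrix.of fun i j : Fin ℓ => a ((lam i : ℤ) - (i : ℤ) + (j : ℤ)))]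
    congr 1
    ext i j
    simp only [Matrix.toBlocks₁₁, Matrix.of_apply, Matrix.submatrix_apply, Function.comp, s,
      finSumFinEquiv_apply_left, hπ1, hH, Fin.revPerm_apply, pf, Fin.val_castAdd, Fin.val_rev]
    congr 1
    have := i.isLt
    have := j.isLt
    push_cast
    omega
  have hB : (E.submatrix s (π ∘ s)).toBlocks₂₂.det = (∏ j, (-1 : R) ^ c j) *
      Matrix.det (Matrix.of fun i j : Fin m => b ((c i : ℤ) - (i : ℤ) + (j : ℤ))) := by
    rw [← Matrix.det_transpose (Matrix.of fun i j : Fin m => b ((c i : ℤ) - (i : ℤ) + (j : ℤ)))]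
    have e1 : ((∏ j : Fin m, (-1 : R) ^ c j)) =
        (∏ j : Fin m, (-1 : R) ^ (ℓ + (j : ℕ))) * ∏ j : Fin m, (-1 : R) ^ (qf j : ℕ) := by
      rw [← Finset.prod_mul_distrib]
      apply Finset.prod_congr rfl
      intro j _
      have h2 := hcl j
      have : ℓ + (j : ℕ) = (qf j : ℕ) + c j := by simp only [qf]; omega
      rw [this, pow_add, mul_right_comm, ← pow_add, ← two_mul, pow_mul]
      simp
    rw [e1, mul_assoc, ← Matrix.det_mul_row, ← Matrix.det_mul_column]
    congr 1
    ext j i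
    simp only [Matrix.toBlocks₂₂, Matrix.of_apply, Matrix.submatrix_apply, Function.comp, s,
      finSumFinEquiv_apply_right, hπ2, hE, Matrix.transpose_apply, Fin.val_natAdd, pow_add]
    have h2 := hcl i
    have e2 : ((ℓ + (j : ℕ) : ℕ) : ℤ) - ((qf i : ℕ) : ℤ) = (c i : ℤ) - (i : ℕ) + (j : ℕ) := by
      simp only [qf]
      omega
    rw [e2]
    ring
  have hs : ((Equiv.Perm.sign π : ℤˣ) : ℤ) = ∏ j, (-1 : ℤ) ^ c j := by
    rw [hsign, Units.coe_prod]
    apply Finset.prod_congr rfl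
    intro j _
    rw [Units.coe_prod, ← Equiv.prod_comp Fin.revPerm]
    simp only [Fin.revPerm_apply, Fin.rev_rev, ite_not, apply_ite Units.val, Units.val_neg,
      Units.val_one, hc]
    rw [← Finset.prod_filter, Finset.prod_const]
  rw [hA, hB, hdet1, hs] at hJ
  rw [hJ, ← mul_assoc]
  push_cast
  rw [← Finset.prod_mul_distrib]
  have h1 : ∀ j, (-1 : R) ^ c j * (-1) ^ c j = 1 := fun j => by
    rw [← mul_pow]; simp
  simp only [h1, Finset.prod_const_one, one_mul]
  rfl
end

section
/- Let P be the polynomial ring over ℤ in countably many variables a_1, a_2, a_3, …, and let I ⊆ P be the ideal generated by the elements r_k = ∑_{i=0}^{2k} (−1)^i a_i a_{2k−i} for all k ≥ 1, where a_0 denotes 1 (these are the coefficient relations of the identity (1 + a_1 + a_2 + ⋯)(1 − a_1 + a_2 − ⋯) = 1 defining the ring of universal Lagrange characteristic classes). Then the quotient ring P/I is torsion-free as a ℤ-module, and the images of the squarefree monomials ∏_{i∈S} a_i, where S ranges over all finite subsets of the positive integers, form a ℤ-module basis of P/I. (This is the assertion in Remark 5.1 that the ring of universal Lagrange characteristic classes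 is torsion free and has the additive basis of monomials a_1^{i_1} a_2^{i_2} ⋯ a_s^{i_s} with each i_k = 0 or 1.) -/
namespace LagrangeRing

open MvPolynomial

noncomputable section

abbrev P := MvPolynomial ℕ+ ℤ

/-- the grading, `a_k` has degree `k` -/
def dg : (ℕ+ →₀ ℕ) →+ ℕ := (Finsupp.weight (fun k : ℕ+ => (k : ℕ)))

/-- the auxiliary weight, `a_k` has weight `k^2` -/
def wt : (ℕ+ →₀ ℕ) →+ ℕ := (Finsupp.weight (fun k : ℕ+ => (k : ℕ) ^ 2))

lemma dg_single (k : ℕ+) (n : ℕ) : dg (Finsupp.single k n) = n * k := by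
  simp [dg, Finsupp.weight_single]

lemma wt_single (k : ℕ+) (n : ℕ) : wt (Finsupp.single k n) = n * k ^ 2 := by
  simp [wt, Finsupp.weight_single]

lemma wt_le (α : ℕ+ →₀ ℕ) : wt α ≤ dg α ^ 2 := by
  induction α using Finsupp.induction_linear with
  | zero => simp
  | add f g hf hg => rw [map_add, map_add]; nlinarith [Nat.zero_le (dg f * dg g)]
  | single k n =>
    rw [dg_single, wt_single, mul_pow]
    exact Nat.mul_le_mul_right _ (Nat.le_self_pow (by norm_num) n)

/-- polynomials all of whose monomials have degree `d` and weight at least `w` -/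
def M (d w : ℕ) : Submodule ℤ P where
  carrier := {p | ∀ γ, coeff γ p ≠ 0 → dg γ = d ∧ w ≤ wt γ}
  add_mem' := by
    intro p q hp hq γ h
    rw [coeff_add] at h
    by_cases h1 : coeff γ p = 0
    · exact hq γ (by intro h2; simp [h1, h2] at h)
    · exact hp γ h1
  zero_mem' := by intro γ h; simp at h
  smul_mem' := by
    intro c p hp γ h
    rw [coeff_smul] at h
    exact hp γ (right_ne_zero_of_smul h)

lemma mem_M {d w : ℕ} {p : P} : p ∈ M d w ↔ ∀ γ, coeff γ p ≠ 0 → dg γ = d ∧ w ≤ wt γ := Iff.rfl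

lemma M_mono {d w w' : ℕ} (h : w ≤ w') {p : P} (hp : p ∈ M d w') : p ∈ M d w :=
  fun γ hγ => ⟨(hp γ hγ).1, h.trans (hp γ hγ).2⟩

lemma M_mul {d w d' w' : ℕ} {p q : P} (hp : p ∈ M d w) (hq : q ∈ M d' w') :
    p * q ∈ M (d + d') (w + w') := by
  classical
  intro γ h
  rw [coeff_mul] at h
  obtain ⟨x, hx, hne⟩ := Finset.exists_ne_zero_of_sum_ne_zero h
  rw [Finset.HasAntidiagonal.mem_antidiagonal] at hx
  have h1 := hp _ (left_ne_zero_of_mul hne)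
  have h2 := hq _ (right_ne_zero_of_mul hne)
  rw [← hx, map_add, map_add]
  omega

lemma M_monomial (α : ℕ+ →₀ ℕ) (c : ℤ) : monomial α c ∈ M (dg α) (wt α) := by
  classical
  intro γ h
  rw [coeff_monomial] at h
  split_ifs at h with h1
  · simp [h1]
  · simp at h

/-- `p` is `x^α` plus terms of higher weight -/
def Tri (p : P) (α : ℕ+ →₀ ℕ) : Prop := p - monomial α 1 ∈ M (dg α) (wt α + 1)

lemma Tri.monomial (α : ℕ+ →₀ ℕ) : Tri (monomial α 1) α := by
  simp [Tri]

lemma Tri.mul {p q : P} {α β : ℕ+ →₀ ℕ} (hp : Tri p α) (hq : Tri q β) : Tri (p * q) (α + β) := by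
  unfold Tri at *
  have e : p * q - MvPolynomial.monomial (α + β) 1 =
      (p - MvPolynomial.monomial α 1) * (q - MvPolynomial.monomial β 1)
      + MvPolynomial.monomial α 1 * (q - MvPolynomial.monomial β 1)
      + (p - MvPolynomial.monomial α 1) * MvPolynomial.monomial β 1 := by
    have : (MvPolynomial.monomial (α + β) 1 : P) =
      MvPolynomial.monomial α 1 * MvPolynomial.monomial β 1 := by simp [monomial_mul]
    rw [this]; ring
  rw [e, map_add, map_add]
  refine add_mem (add_mem ?_ ?_) ?_
  · exact M_mono (by omega) (M_mul hp hq)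
  · exact M_mono (by omega) (M_mul (M_monomial α 1) hq)
  · exact M_mono (by omega) (M_mul hp (M_monomial β 1))

lemma Tri.one : Tri 1 0 := by
  simp [Tri]

lemma Tri.pow {p : P} {α : ℕ+ →₀ ℕ} (hp : Tri p α) (n : ℕ) : Tri (p ^ n) (n • α) := by
  induction n with
  | zero => simpa using Tri.one
  | succ n ih => rw [pow_succ, succ_nsmul]; exact ih.mul hp

lemma Tri.prod {p : ℕ+ → P} {α : ℕ+ → ℕ+ →₀ ℕ} (s : Finset ℕ+) (h : ∀ k, Tri (p k) (α k)) :
    Tri (∏ k ∈ s, p k) (∑ k ∈ s, α k) := by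
  classical
  induction s using Finset.induction_on with
  | empty => simpa using Tri.one
  | insert a s ha ih => rw [Finset.prod_insert ha, Finset.sum_insert ha]; exact (h a).mul ih

def a : ℕ → P := fun i => if h : 0 < i then X (⟨i, h⟩ : ℕ+) else 1

def r (k : ℕ) : P := ∑ i ∈ Finset.range (2 * k + 1), (-1 : P) ^ i * (a i * a (2 * k - i))

def f (k : ℕ+) : P := (-1) ^ (k : ℕ) * r k

lemma a_pnat (k : ℕ+) : a k = X k := by
  have h : 0 < (k : ℕ) := k.pos
  unfold a
  rw [dif_pos h]
  exact congrArg X (PNat.eq rfl)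

lemma a_mem (i : ℕ) : a i ∈ M i (i ^ 2) := by
  rcases Nat.eq_zero_or_pos i with rfl | h
  · simpa [a] using M_monomial 0 1
  · obtain ⟨k, rfl⟩ : ∃ k : ℕ+, (k : ℕ) = i := ⟨Nat.toPNat i h, rfl⟩
    have := M_monomial (Finsupp.single k 1) 1
    rw [dg_single, wt_single] at this
    rw [a_pnat]
    simpa [X] using this

lemma sign_mul_mem {d w : ℕ} {p : P} (n : ℕ) (hp : p ∈ M d w) : (-1) ^ n * p ∈ M d w := by
  rcases neg_one_pow_eq_or P n with h | h <;> rw [h]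
  · simpa using hp
  · simpa using hp

lemma f_tri (k : ℕ+) : Tri (f k) (Finsupp.single k 2) := by
  have e : f k - monomial (Finsupp.single k 2) 1 =
      ∑ i ∈ (Finset.range (2 * (k : ℕ) + 1)).erase k,
        (-1 : P) ^ (k : ℕ) * ((-1 : P) ^ i * (a i * a (2 * k - i))) := by
    have hk : (k : ℕ) ∈ Finset.range (2 * (k : ℕ) + 1) := by
      rw [Finset.mem_range]; omega
    rw [f, r, Finset.mul_sum, ← Finset.add_sum_erase _ _ hk]
    have h2 : 2 * (k : ℕ) - k = k := by omega
    have h3 : (monomial (Finsupp.single k 2) 1 : P) = X k ^ 2 := by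
      rw [X_pow_eq_monomial]
    rw [h2, h3, a_pnat, ← mul_assoc, ← mul_pow]
    simp
    ring
  unfold Tri
  rw [e, dg_single, wt_single]
  refine Submodule.sum_mem _ fun i hi => sign_mul_mem _ (sign_mul_mem _ ?_)
  rw [Finset.mem_erase, Finset.mem_range] at hi
  obtain ⟨j, hj⟩ : ∃ j, 2 * (k : ℕ) = i + j := ⟨2 * k - i, by omega⟩
  have h2 : 2 * (k : ℕ) - i = j := by omega
  rw [h2, hj]
  refine M_mono ?_ (M_mul (a_mem i) (a_mem j))
  have hne := hi.1
  zify at *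
  have : (i : ℤ) - k ≠ 0 := sub_ne_zero.mpr hne
  have hp : 0 < ((i : ℤ) - k) ^ 2 := by positivity
  have : (j : ℤ) = 2 * k - i := by linarith
  rw [this]
  nlinarith

def u (k : ℕ+) (n : ℕ) : P := X k ^ (n % 2) * f k ^ (n / 2)

def t (α : ℕ+ →₀ ℕ) : P := α.prod u

lemma u_zero (k : ℕ+) : u k 0 = 1 := by simp [u]
lemma u_one (k : ℕ+) : u k 1 = X k := by simp [u]
lemma u_add_two (k : ℕ+) (n : ℕ) : u k (2 + n) = f k * u k n := by
  have h1 : (2 + n) % 2 = n % 2 := by omega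
  have h2 : (2 + n) / 2 = n / 2 + 1 := by omega
  rw [u, u, h1, h2, pow_succ]; ring

lemma u_tri (k : ℕ+) (n : ℕ) : Tri (u k n) (Finsupp.single k n) := by
  have h1 : Tri (X k) (Finsupp.single k 1) := Tri.monomial _
  have := (h1.pow (n % 2)).mul ((f_tri k).pow (n / 2))
  rw [Finsupp.smul_single, Finsupp.smul_single, ← Finsupp.single_add] at this
  have e : (n % 2) • 1 + (n / 2) • 2 = n := by
    simp only [smul_eq_mul]; omega
  rwa [e] at this

lemma t_tri (α : ℕ+ →₀ ℕ) : Tri (t α) α := by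
  have := Tri.prod α.support (fun k => u_tri k (α k))
  have h : ∑ k ∈ α.support, Finsupp.single k (α k) = α := Finsupp.sum_single α
  rwa [h] at this

lemma t_add_two (k : ℕ+) (α : ℕ+ →₀ ℕ) : t (Finsupp.single k 2 + α) = f k * t α := by
  classical
  have h1 : ∀ β : ℕ+ →₀ ℕ, t β = u k (β k) * (β.erase k).prod u := fun β =>
    (Finsupp.mul_prod_erase' β k u (fun i => u_zero i)).symm
  rw [h1, h1 α]
  have : (Finsupp.single k 2 + α).erase k = α.erase k := by
    rw [Finsupp.erase_add]; simp
  rw [this, Finsupp.add_apply, Finsupp.single_eq_same, u_add_two, mul_assoc]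

def T : P →ₗ[ℤ] P := (basisMonomials ℕ+ ℤ).constr ℤ t

lemma T_monomial_one (α : ℕ+ →₀ ℕ) : T (monomial α 1) = t α := by
  have := (basisMonomials ℕ+ ℤ).constr_basis ℤ t α
  simpa [T] using this

lemma T_monomial (α : ℕ+ →₀ ℕ) (c : ℤ) : T (monomial α c) = c • t α := by
  rw [← T_monomial_one, ← map_smul, smul_monomial]; simp

lemma T_inj (p : P) (hp : T p = 0) : p = 0 := by
  classical
  by_contra hne
  have hs : p.support.Nonempty := by
    rwa [Finset.nonempty_iff_ne_empty, Ne, support_eq_empty]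
  obtain ⟨α, hα, hmin⟩ := Finset.exists_min_image p.support wt hs
  have h1 : T p = ∑ β ∈ p.support, coeff β p • t β := by
    conv_lhs => rw [p.as_sum]
    rw [map_sum]
    exact Finset.sum_congr rfl fun β _ => T_monomial β _
  have h2 : coeff α (T p) = coeff α p := by
    rw [h1, coeff_sum, Finset.sum_eq_single α]
    · have h3 : coeff α (t α - monomial α 1) = 0 := by
        by_contra h
        have := (t_tri α α h).2
        omega
      rw [coeff_sub, coeff_monomial, if_pos rfl, sub_eq_zero] at h3
      rw [coeff_smul, h3]; simp
    · intro β hβ hβα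
      have h3 : coeff α (t β - monomial β 1) = 0 := by
        by_contra h
        have := (t_tri β α h).2
        have := hmin β hβ
        omega
      rw [coeff_sub, coeff_monomial, if_neg hβα, sub_zero] at h3
      rw [coeff_smul, h3, smul_zero]
    · intro h; exact absurd hα h
  rw [hp, coeff_zero] at h2
  exact (mem_support_iff.mp hα) h2.symm

lemma mem_range_aux (n : ℕ) : ∀ α : ℕ+ →₀ ℕ, dg α ^ 2 - wt α < n → monomial α 1 ∈ T.range := by
  induction n with
  | zero => intro α h; omega
  | succ n ih =>
    intro α h
    have h1 : t α - monomial α 1 ∈ T.range := by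
      rw [MvPolynomial.as_sum (t α - monomial α 1)]
      refine Submodule.sum_mem _ fun β hβ => ?_
      have h2 := t_tri α β (mem_support_iff.mp hβ)
      have h3 : monomial β 1 ∈ T.range := by
        apply ih
        rw [h2.1]
        have := wt_le β
        rw [h2.1] at this
        omega
      have h4 := Submodule.smul_mem _ (coeff β (t α - monomial α 1)) h3
      rw [smul_monomial] at h4
      simpa using h4
    have h2 : t α ∈ T.range := ⟨_, T_monomial_one α⟩
    have := Submodule.sub_mem _ h2 h1
    simpa using this

lemma T_surj (p : P) : ∃ q, T q = p := by
  change p ∈ T.range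
  rw [p.as_sum]
  refine Submodule.sum_mem _ fun β _ => ?_
  have h4 := Submodule.smul_mem _ (coeff β p) (mem_range_aux _ β (Nat.lt_succ_self _))
  rw [smul_monomial] at h4
  simpa using h4

lemma T_shift (k : ℕ+) (q : P) : T (monomial (Finsupp.single k 2) 1 * q) = f k * T q := by
  induction q using MvPolynomial.induction_on' with
  | monomial α c =>
    rw [monomial_mul, T_monomial, T_monomial, t_add_two, one_mul, mul_smul_comm]
  | add p q hp hq => rw [mul_add, map_add, map_add, hp, hq, mul_add]

/-- polynomials without squarefree monomials -/
def N : Submodule ℤ P where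
  carrier := {p | ∀ γ : ℕ+ →₀ ℕ, (∀ k, γ k ≤ 1) → coeff γ p = 0}
  add_mem' := by
    intro p q hp hq γ h
    rw [coeff_add, hp γ h, hq γ h, add_zero]
  zero_mem' := by intro γ h; simp
  smul_mem' := by
    intro c p hp γ h
    rw [coeff_smul, hp γ h, smul_zero]

lemma shift_mem_N (k : ℕ+) (q : P) : monomial (Finsupp.single k 2) 1 * q ∈ N := by
  classical
  intro γ h
  rw [coeff_monomial_mul', if_neg]
  intro hle
  have := hle k
  have := h k
  simp at *
  omega

def I : Ideal P := Ideal.span {x | ∃ k : ℕ, 1 ≤ k ∧ x = r k}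

lemma f_mem (k : ℕ+) : f k ∈ I :=
  Ideal.mul_mem_left _ _ (Ideal.subset_span ⟨k, k.2, rfl⟩)

lemma r_eq (k : ℕ+) : r k = (-1) ^ (k : ℕ) * f k := by
  rw [f, ← mul_assoc, ← mul_pow]; simp

lemma I_sub (x : P) (hx : x ∈ I) : ∀ y : P, y * x ∈ N.map T := by
  induction hx using Submodule.span_induction with
  | mem x h =>
    obtain ⟨k, hk, rfl⟩ := h
    obtain ⟨k, rfl⟩ : ∃ k' : ℕ+, (k' : ℕ) = k := ⟨Nat.toPNat k hk, rfl⟩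
    intro y
    obtain ⟨q, hq⟩ := T_surj (y * (-1) ^ (k : ℕ))
    refine ⟨_, shift_mem_N k q, ?_⟩
    rw [T_shift, hq, r_eq k]; ring
  | zero => intro y; simp
  | add x y _ _ hx hy => intro z; rw [mul_add]; exact add_mem (hx z) (hy z)
  | smul c x _ hx => intro y; rw [smul_eq_mul, ← mul_assoc]; exact hx _

lemma t_mem (α : ℕ+ →₀ ℕ) (k : ℕ+) (h : 2 ≤ α k) : t α ∈ I := by
  have : α = Finsupp.single k 2 + (α - Finsupp.single k 2) := by
    rw [add_tsub_cancel_of_le]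
    rwa [Finsupp.single_le_iff]
  rw [this, t_add_two]
  exact Ideal.mul_mem_right _ _ (f_mem k)

def ind (S : Finset ℕ+) : ℕ+ →₀ ℕ := Finsupp.indicator S (fun _ _ => 1)

lemma ind_apply (S : Finset ℕ+) (k : ℕ+) : ind S k = if k ∈ S then 1 else 0 := by
  classical
  simp [ind, Finsupp.indicator_apply]

lemma ind_le (S : Finset ℕ+) (k : ℕ+) : ind S k ≤ 1 := by
  rw [ind_apply]; split_ifs <;> simp

lemma ind_inj : Function.Injective ind := by
  intro S S' h
  ext k
  have := DFunLike.congr_fun h k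
  rw [ind_apply, ind_apply] at this
  by_cases h1 : k ∈ S <;> by_cases h2 : k ∈ S' <;> simp_all

lemma t_ind (S : Finset ℕ+) : t (ind S) = ∏ i ∈ S, X i := by
  classical
  have hs : (ind S).support ⊆ S := by
    intro k hk
    rw [Finsupp.mem_support_iff, ind_apply] at hk
    by_contra h
    simp [h] at hk
  rw [t, Finsupp.prod_of_support_subset _ hs _ (fun i _ => u_zero i)]
  refine Finset.prod_congr rfl fun i hi => ?_
  rw [ind_apply, if_pos hi, u_one]

lemma ind_support (α : ℕ+ →₀ ℕ) (h : ∀ k, α k ≤ 1) : ind α.support = α := by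
  classical
  ext k
  rw [ind_apply]
  have := h k
  by_cases h0 : α k = 0
  · simp [h0]
  · rw [if_pos (Finsupp.mem_support_iff.mpr h0)]; omega

def v (S : Finset ℕ+) : P ⧸ I := Ideal.Quotient.mk I (∏ i ∈ S, X i)

lemma v_li : LinearIndependent ℤ v := by
  classical
  rw [linearIndependent_iff]
  intro l hl
  set p : P := l.sum fun S c => monomial (ind S) c with hp
  have h1 : Ideal.Quotient.mk I (T p) = 0 := by
    rw [← hl, hp, Finsupp.linearCombination_apply, Finsupp.sum, Finsupp.sum, map_sum, map_sum]
    refine Finset.sum_congr rfl fun S _ => ?_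
    rw [T_monomial, t_ind, map_zsmul, v]
  rw [Ideal.Quotient.eq_zero_iff_mem] at h1
  obtain ⟨n, hn, hTn⟩ := I_sub _ h1 1
  rw [one_mul] at hTn
  have h2 : n = p := by
    rw [← sub_eq_zero]
    apply T_inj
    rw [map_sub, hTn, sub_self]
  ext S
  have h3 := hn (ind S) (ind_le S)
  rw [h2, hp, Finsupp.sum, coeff_sum] at h3
  simp only [coeff_monomial, ind_inj.eq_iff] at h3
  simpa using h3

lemma v_span : ⊤ ≤ Submodule.span ℤ (Set.range v) := by
  rintro x -
  obtain ⟨p, rfl⟩ := Ideal.Quotient.mk_surjective x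
  obtain ⟨q, rfl⟩ := T_surj p
  induction q using MvPolynomial.induction_on' with
  | monomial α c =>
    rw [T_monomial, map_zsmul]
    refine Submodule.smul_mem _ _ ?_
    by_cases h : ∀ k, α k ≤ 1
    · rw [← ind_support α h, t_ind]
      exact Submodule.subset_span ⟨_, rfl⟩
    · push Not at h
      obtain ⟨k, hk⟩ := h
      rw [Ideal.Quotient.eq_zero_iff_mem.mpr (t_mem α k hk)]
      exact Submodule.zero_mem _
  | add p q hp hq => rw [map_add, map_add]; exact add_mem hp hq

def B : Module.Basis (Finset ℕ+) ℤ (P ⧸ I) := Module.Basis.mk v_li v_span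

lemma B_apply (S : Finset ℕ+) : B S = Ideal.Quotient.mk I (∏ i ∈ S, X i) := by
  rw [B, Module.Basis.mk_apply]; rfl

lemma tf (n : ℤ) (x : P ⧸ I) (h : n • x = 0) : n = 0 ∨ x = 0 := by
  by_cases hn : n = 0
  · exact Or.inl hn
  · right
    apply B.repr.injective
    ext S
    have h1 : n • B.repr x = 0 := by rw [← map_smul, h, map_zero]
    have h2 := DFunLike.congr_fun h1 S
    simp only [Finsupp.smul_apply, smul_eq_mul, Finsupp.zero_apply, mul_eq_zero] at h2
    simpa [hn] using h2

end

end LagrangeRing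


open MvPolynomial in
/-- **The ring of universal Lagrange characteristic classes.**
Let `P = ℤ[a₁, a₂, …]` and `I` the ideal generated by the elements
`∑_{i=0}^{2k} (-1)^i aᵢ a_{2k-i}` (with `a₀ = 1`) for `k ≥ 1`.  Then `P/I` is torsion-free
as a `ℤ`-module and the images of the squarefree monomials `∏_{i ∈ S} aᵢ`, for `S` a finite
set of positive integers, form a `ℤ`-module basis of `P/I` (Remark 5.1). -/
theorem stmt_4 :
    let a : ℕ → MvPolynomial ℕ+ ℤ := fun i => if h : 0 < i then X (⟨i, h⟩ : ℕ+) else 1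
    let I : Ideal (MvPolynomial ℕ+ ℤ) :=
      Ideal.span {r | ∃ k : ℕ, 1 ≤ k ∧
        r = ∑ i ∈ Finset.range (2 * k + 1),
          (-1 : MvPolynomial ℕ+ ℤ) ^ i * (a i * a (2 * k - i))}
    (∀ (n : ℤ) (x : MvPolynomial ℕ+ ℤ ⧸ I), n • x = 0 → n = 0 ∨ x = 0) ∧
    ∃ B : Module.Basis (Finset ℕ+) ℤ (MvPolynomial ℕ+ ℤ ⧸ I),
      ∀ S : Finset ℕ+, B S = Ideal.Quotient.mk I (∏ i ∈ S, X i) := by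
  exact ⟨LagrangeRing.tf, LagrangeRing.B, LagrangeRing.B_apply⟩
end

section
/- Fix N ≥ 1 and work in the polynomial ring ℚ[α_1, …, α_N, β_1, …, β_N] in 2N variables. Define c_n (for n ≥ 1) to be the n-th coefficient of the formal power series (∏_{j=1}^{N} (1 + β_j t)) · (∏_{i=1}^{N} (1 + α_i t))⁻¹ in (ℚ[α, β])[[t]]. Then the elements c_1, …, c_N of ℚ[α_1, …, α_N, β_1, …, β_N] are algebraically independent over ℚ. (This algebraic independence of the quotient Chern classes is what guarantees the uniqueness of the universal polynomial tp(η) in Theorem 2.6: a polynomial identity in the quotient Chern classes c_1, …, c_N holding for all root families is unique.) -/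
lemma coeff_prod_esymm (N n : ℕ) :
    PowerSeries.coeff n (∏ j : Fin N,
      (1 + PowerSeries.C (R := MvPolynomial (Fin N) ℚ) (MvPolynomial.X j) * PowerSeries.X)) =
    MvPolynomial.esymm (Fin N) ℚ n := by
  classical
  rw [Finset.prod_one_add, map_sum, MvPolynomial.esymm, Finset.powersetCard_eq_filter,
    Finset.sum_filter]
  refine Finset.sum_congr rfl fun t _ => ?_
  rw [Finset.prod_mul_distrib, Finset.prod_const, ← map_prod, PowerSeries.coeff_C_mul,
    PowerSeries.coeff_X_pow]
  simp [eq_comm]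


open MvPolynomial in
/-- **Algebraic independence of the quotient Chern classes (uniqueness in Theorem 2.6).**
In `ℚ[α₁,…,α_N, β₁,…,β_N]`, let `c_n` be the `n`-th coefficient of the power series
`(∏ (1 + βⱼ t)) * (∏ (1 + αᵢ t))⁻¹`.  Then `c₁, …, c_N` are algebraically independent
over `ℚ`. -/
theorem stmt_11 (N : ℕ) (hN : 1 ≤ N) :
    AlgebraicIndependent ℚ (fun i : Fin N =>
      PowerSeries.coeff (R := MvPolynomial (Fin N ⊕ Fin N) ℚ) ((i : ℕ) + 1)
        ((∏ j : Fin N,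
            (1 + PowerSeries.C (R := MvPolynomial (Fin N ⊕ Fin N) ℚ) (X (Sum.inr j)) *
              PowerSeries.X)) *
          PowerSeries.invOfUnit
            (∏ i : Fin N,
              (1 + PowerSeries.C (R := MvPolynomial (Fin N ⊕ Fin N) ℚ) (X (Sum.inl i)) *
                PowerSeries.X)) 1)) := by
  set B := ∏ i : Fin N, (1 + PowerSeries.C (R := MvPolynomial (Fin N ⊕ Fin N) ℚ) (X (Sum.inl i)) *
                PowerSeries.X) with hB
  let φ : MvPolynomial (Fin N ⊕ Fin N) ℚ →ₐ[ℚ] MvPolynomial (Fin N) ℚ :=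
    aeval (Sum.elim (fun _ => 0) X)
  have hinv : B * PowerSeries.invOfUnit B 1 = 1 := by
    apply PowerSeries.mul_invOfUnit
    simp [hB, map_prod]
  have hmB : PowerSeries.map (φ : _ →+* MvPolynomial (Fin N) ℚ) B = 1 := by
    simp [hB, map_prod, φ]
  have hmI : PowerSeries.map (φ : _ →+* MvPolynomial (Fin N) ℚ)
      (PowerSeries.invOfUnit B 1) = 1 := by
    have := congrArg (PowerSeries.map (φ : _ →+* MvPolynomial (Fin N) ℚ)) hinv
    rwa [map_mul, hmB, one_mul, map_one] at this
  have key : AlgebraicIndependent ℚ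
      (fun i : Fin N => esymm (Fin N) ℚ ((i : ℕ) + 1)) := by
    have h := esymmAlgHom_injective (σ := Fin N) (n := N) ℚ (by simp)
    intro p q hpq
    apply h
    apply Subtype.ext
    rw [esymmAlgHom_apply, esymmAlgHom_apply]
    exact hpq
  refine AlgebraicIndependent.of_comp φ ?_
  convert key using 1
  funext i
  rw [← coeff_prod_esymm]
  change (φ : MvPolynomial (Fin N ⊕ Fin N) ℚ →+* MvPolynomial (Fin N) ℚ) _ = _
  rw [← PowerSeries.coeff_map, map_mul, hmI, mul_one]
  simp [map_prod, φ]
end
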